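/- Let X = {0,1}^ℕ with the shift T and let 0 ≤ a ≤ 1. If a_n = a for all n ≥ 1 (constant sequence), then the only shift-invariant Borel probability measure μ with μ([0^n]) = a for all n ≥ 1 is μ = a δ_{0^∞} + (1−a) δ_{1^∞}, where 0^∞ and 1^∞ are the constant sequences of zeros and of ones; consequently the recurrence set R(a; {[0^n]}_{n≥1}) has zero Bowen topological entropy. -/

import Mathlib

open MeasureTheory Filter Topology Set
open scoped ENNReal NNReal

/-!  General definitions: Bowen topological entropy (via covers by Bowen balls),
measure-theoretic (Kolmogorov–Sinai) entropy, generic points, saturated systems,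
and the specification property. -/

variable {X : Type*}

/-- The Bowen ball of center `x`, order `n`, radius `ε` (for the metric
`d_n(x,y) = max_{0 ≤ j < n} d(T^j x, T^j y)`). -/
def bowenBall [PseudoMetricSpace X] (T : X → X) (x : X) (n : ℕ) (ε : ℝ) : Set X :=
  {y | ∀ j < n, dist (T^[j] x) (T^[j] y) < ε}

/-- `H_n^s(Z,ε)`: infimum of `Σ_i exp(-s n_i)` over countable covers of `Z` by Bowen balls
`B_{n_i}(x_i,ε)` with all `n_i ≥ n`. -/
noncomputable def bowenH [PseudoMetricSpace X] (T : X → X) (Z : Set X) (s ε : ℝ) (n : ℕ) :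
    ℝ≥0∞ :=
  ⨅ (C : Set (X × ℕ)) (_ : C.Countable) (_ : ∀ p ∈ C, n ≤ p.2)
    (_ : Z ⊆ ⋃ p ∈ C, bowenBall T p.1 p.2 ε),
    ∑' p : C, ENNReal.ofReal (Real.exp (-s * ((p : X × ℕ).2 : ℝ)))

/-- `h_top(Z,ε)`: the critical exponent of `s ↦ H^s(Z,ε) = sup_n H_n^s(Z,ε)`. -/
noncomputable def bowenEntropyRes [PseudoMetricSpace X] (T : X → X) (Z : Set X) (ε : ℝ) :
    ℝ≥0∞ :=
  sInf ((fun s : ℝ≥0 => (s : ℝ≥0∞)) '' {s : ℝ≥0 | (⨆ n, bowenH T Z (s : ℝ) ε n) = 0})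

/-- Bowen topological entropy of a subset `Z`: `h_top(Z) = lim_{ε → 0} h_top(Z,ε)`
(the limit being a supremum by monotonicity in `ε`). -/
noncomputable def bowenEntropy [PseudoMetricSpace X] (T : X → X) (Z : Set X) : ℝ≥0∞ :=
  ⨆ (ε : ℝ) (_ : 0 < ε), bowenEntropyRes T Z ε

/-- Entropy of the partition `P ∨ T⁻¹P ∨ ⋯ ∨ T⁻⁽ⁿ⁻¹⁾P`, where a countable partition is
encoded as a function `P : X → ℕ`: it is the Shannon entropy of the map
`x ↦ (P x, P (T x), …, P (Tⁿ⁻¹ x))`. -/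
noncomputable def partInfo [MeasurableSpace X] (T : X → X) (μ : Measure X) (P : X → ℕ)
    (n : ℕ) : ℝ≥0∞ :=
  ∑' l : List ℕ, ENNReal.ofReal (Real.negMulLog
    ((μ ((fun x => (List.range n).map fun j => P (T^[j] x)) ⁻¹' {l})).toReal))

/-- Measure-theoretic (Kolmogorov–Sinai) entropy `h_μ(T)`: supremum over finite measurable
partitions `P` of `lim_n (1/n) H_μ(P ∨ T⁻¹P ∨ ⋯ ∨ T⁻⁽ⁿ⁻¹⁾P)` (the limit exists by
subadditivity, so it may be written as a `liminf`). -/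
noncomputable def ksEntropy [MeasurableSpace X] (T : X → X) (μ : Measure X) : ℝ≥0∞ :=
  ⨆ (P : X → ℕ) (_ : Measurable P) (_ : (Set.range P).Finite),
    Filter.atTop.liminf fun n : ℕ => partInfo T μ P n / (n : ℝ≥0∞)

/-- `x` is a generic point for `μ` : the empirical measures `(1/n) Σ_{j<n} δ_{T^j x}`
converge to `μ` in the weak-star topology, i.e. Birkhoff averages of every continuous
function converge to its integral. -/
def IsGeneric [TopologicalSpace X] [MeasurableSpace X] (T : X → X) (μ : Measure X)
    (x : X) : Prop :=
  ∀ f : C(X, ℝ), Tendsto (fun n : ℕ => (∑ j ∈ Finset.range n, f (T^[j] x)) / (n : ℝ))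
    atTop (𝓝 (∫ y, f y ∂μ))

/-- `μ ∈ V(x)` : `μ` is a weak-star limit point of the empirical measures of `x`. -/
def IsLimitMeasure [TopologicalSpace X] [MeasurableSpace X] (T : X → X) (x : X)
    (μ : Measure X) : Prop :=
  ∃ φ : ℕ → ℕ, StrictMono φ ∧ ∀ f : C(X, ℝ),
    Tendsto (fun m : ℕ => (∑ j ∈ Finset.range (φ m), f (T^[j] x)) / (φ m : ℝ))
      atTop (𝓝 (∫ y, f y ∂μ))

/-- A system is saturated if `h_top(G_μ) = h_μ` for every invariant Borel probability
measure `μ`. -/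
def Saturated [PseudoMetricSpace X] [MeasurableSpace X] (T : X → X) : Prop :=
  ∀ μ : Measure X, IsProbabilityMeasure μ → MeasurePreserving T μ μ →
    bowenEntropy T {x | IsGeneric T μ x} = ksEntropy T μ

/-- The specification property. -/
def SpecificationProperty [PseudoMetricSpace X] (T : X → X) : Prop :=
  ∀ ε : ℝ, 0 < ε → ∃ m : ℕ, 1 ≤ m ∧
    ∀ k : ℕ, 2 ≤ k → ∀ x : ℕ → X, ∀ a b : ℕ → ℕ,
      (∀ i < k, a i ≤ b i) →
      (∀ i, i + 1 < k → b i + m ≤ a (i + 1)) →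
      ∃ y : X, ∀ i < k, ∀ n ≤ b i - a i,
        dist (T^[a i + n] y) (T^[n] (x i)) < ε

/-! Symbolic dynamics on `X = {0,1}^ℕ`. -/

/-- The metric `d(x,y) = (1/2)^(first difference)` on the symbolic space `{0,1}^ℕ`. -/
noncomputable instance : MetricSpace (ℕ → Bool) := PiNat.metricSpace

/-- The shift map on `{0,1}^ℕ`. -/
def shift : (ℕ → Bool) → ℕ → Bool := fun x n => x (n + 1)

/-- The cylinder `[w]` of all sequences beginning with the finite word `w`. -/
def cyl (w : List Bool) : Set (ℕ → Bool) :=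
  {x | ∀ i : Fin w.length, x i.1 = w.get i}

/-- `R(x,[w]) = r` : the frequency of visits of the orbit of `x` to the cylinder `[w]`
exists and equals `r`. -/
def hasFreq (w : List Bool) (x : ℕ → Bool) (r : ℝ) : Prop :=
  Filter.Tendsto (fun n : ℕ =>
      (∑ j ∈ Finset.range n, (cyl w).indicator (fun _ => (1 : ℝ)) (shift^[j] x)) / (n : ℝ))
    Filter.atTop (nhds r)

section ZeroOneShift

lemma shift_iterate_apply (j : ℕ) (x : ℕ → Bool) (n : ℕ) : shift^[j] x n = x (j + n) := by
  induction j generalizing x with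
  | zero => simp
  | succ j ih =>
    rw [Function.iterate_succ_apply, ih]
    simp only [shift]
    congr 1
    omega

lemma mem_cyl_replicate (n : ℕ) (b : Bool) (x : ℕ → Bool) :
    x ∈ cyl (List.replicate n b) ↔ ∀ i < n, x i = b := by
  simp only [cyl, mem_ofPred_eq, List.get_eq_getElem, List.getElem_replicate]
  exact ⟨fun h i hi => h ⟨i, by simpa using hi⟩, fun h i => h i (by simpa using i.2)⟩

lemma measurableSet_cyl (w : List Bool) : MeasurableSet (cyl w) := by
  simp only [cyl, ofPred_forall]
  exact MeasurableSet.iInter fun i => measurable_pi_apply _ (measurableSet_singleton _)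

/-- An invariant measure giving the same mass `a` to all cylinders `[0^n]` gives mass `a` to the
zero sequence. -/
lemma measure_singleton_false {μ : Measure (ℕ → Bool)} [IsProbabilityMeasure μ] {m : ℝ≥0∞}
    (hμ : ∀ n : ℕ, 1 ≤ n → μ (cyl (List.replicate n false)) = m) :
    μ {fun _ => false} = m := by
  have hset : ({fun _ => false} : Set (ℕ → Bool)) =
      ⋂ n : ℕ, cyl (List.replicate (n + 1) false) := by
    ext x
    simp only [mem_singleton_iff, mem_iInter, mem_cyl_replicate]
    exact ⟨fun h n i _ => by rw [h], fun h => funext fun i => h i i i.lt_succ_self⟩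
  have ht := tendsto_measure_iInter_atTop (μ := μ)
    (s := fun n : ℕ => cyl (List.replicate (n + 1) false))
    (fun n => (measurableSet_cyl _).nullMeasurableSet)
    (fun k n hkn x hx => by
      rw [mem_cyl_replicate] at hx ⊢
      exact fun i hi => hx i (by omega))
    ⟨0, measure_ne_top _ _⟩
  rw [← hset] at ht
  refine tendsto_nhds_unique ht ?_
  simp [Function.comp_def, hμ]

lemma measure_eq_of_constant_cylinders {μ : Measure (ℕ → Bool)} [IsProbabilityMeasure μ]
    (hT : MeasurePreserving shift μ μ) {m : ℝ≥0∞}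
    (hμ : ∀ n : ℕ, 1 ≤ n → μ (cyl (List.replicate n false)) = m) :
    μ = m • Measure.dirac (fun _ => false) + (1 - m) • Measure.dirac (fun _ => true) := by
  have hP := measure_singleton_false hμ
  have hnull (j : ℕ) : μ (shift^[j] ⁻¹' cyl (List.replicate 1 false) \ {fun _ => false}) = 0 := by
    have hsub : ({fun _ => false} : Set (ℕ → Bool)) ⊆
        shift^[j] ⁻¹' cyl (List.replicate 1 false) := by
      rintro x rfl
      rw [mem_preimage, mem_cyl_replicate]
      intro i _
      rw [shift_iterate_apply]
    rw [measure_sdiff hsub (measurableSet_singleton _).nullMeasurableSet (measure_ne_top _ _),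
      (hT.iterate j).measure_preimage (measurableSet_cyl _).nullMeasurableSet, hμ 1 le_rfl, hP,
      tsub_self]
  have hae : ∀ᵐ x ∂μ, x ∈ ({fun _ => false} ∪ {fun _ => true} : Set (ℕ → Bool)) := by
    filter_upwards [ae_all_iff.2 fun j => measure_eq_zero_iff_ae_notMem.1 (hnull j)] with x hx
    by_contra hcon
    simp only [mem_union, mem_singleton_iff, not_or] at hcon
    obtain ⟨j, hj⟩ := Function.ne_iff.1 hcon.2
    refine hx j ⟨?_, hcon.1⟩
    rw [mem_preimage, mem_cyl_replicate]
    intro i hi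
    obtain rfl : i = 0 := by omega
    rw [shift_iterate_apply]
    simpa using hj
  have hdisj : Disjoint ({fun _ => false} : Set (ℕ → Bool)) {fun _ => true} :=
    disjoint_singleton.2 fun h => by simpa using congrFun h 0
  have hone : m + μ {fun _ => true} = 1 := by
    rw [← hP, ← measure_union hdisj (measurableSet_singleton _), ← prob_compl_eq_zero_iff
      ((measurableSet_singleton _).union (measurableSet_singleton _))]
    exact hae
  have hm : m ≠ ∞ := hP ▸ measure_ne_top _ _
  have hQ : μ {fun _ => true} = 1 - m := by
    rw [← hone, ENNReal.add_sub_cancel_left hm]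
  calc μ = μ.restrict ({fun _ => false} ∪ {fun _ => true}) :=
        (Measure.restrict_eq_self_of_ae_mem hae).symm
    _ = _ := by
        rw [Measure.restrict_union hdisj (measurableSet_singleton _),
          Measure.restrict_singleton, Measure.restrict_singleton, hP, hQ]

/-- The number of occurrences of the word `01` starting before position `L`. -/
def riseCount (L : ℕ) (x : ℕ → Bool) : ℕ :=
  ∑ j ∈ Finset.range L, if x j = false ∧ x (j + 1) = true then 1 else 0

/-- The sequence obtained by prepending a symbol. -/
def prepend (b : Bool) (x : ℕ → Bool) : ℕ → Bool := fun n => Nat.casesOn n b x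

lemma prepend_injective : Function.Injective fun p : Bool × (ℕ → Bool) => prepend p.1 p.2 := by
  rintro ⟨b, x⟩ ⟨c, y⟩ h
  exact Prod.ext (congrFun h 0) (funext fun n => congrFun h (n + 1))

lemma riseCount_prepend (L : ℕ) (b : Bool) (x : ℕ → Bool) :
    riseCount (L + 1) (prepend b x) =
      riseCount L x + if b = false ∧ x 0 = true then 1 else 0 := by
  rw [riseCount, Finset.sum_range_succ']
  rfl

/-- The sequences vanishing from position `L` on, i.e. the words of length `L` followed by
zeros. -/
def paddedWords : ℕ → Finset (ℕ → Bool)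
  | 0 => {fun _ => false}
  | L + 1 => (Finset.univ ×ˢ paddedWords L).map ⟨_, prepend_injective⟩

lemma mem_paddedWords {L : ℕ} {x : ℕ → Bool} (h : ∀ i, L ≤ i → x i = false) :
    x ∈ paddedWords L := by
  induction L generalizing x with
  | zero => exact Finset.mem_singleton.2 (funext fun i => h i i.zero_le)
  | succ L ih =>
    refine Finset.mem_map.2 ⟨(x 0, shift x), ?_, ?_⟩
    · exact Finset.mem_product.2 ⟨Finset.mem_univ _, ih fun i hi => h _ (by omega)⟩
    · funext n
      cases n <;> rfl

/-- The eigenvector identity of the transfer matrix with entries `1, r², 1, 1`, summed over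
words. -/
lemma sum_paddedWords_weight (r : ℝ) (L : ℕ) :
    ∑ x ∈ paddedWords L, r ^ (2 * riseCount L x) * (if x 0 = true then r else 1) =
      (1 + r) ^ L := by
  induction L with
  | zero => simp [paddedWords, riseCount]
  | succ L ih =>
    rw [paddedWords, Finset.sum_map, Finset.sum_product, Fintype.sum_bool,
      ← Finset.sum_add_distrib, pow_succ, ← ih, Finset.sum_mul]
    refine Finset.sum_congr rfl fun x _ => ?_
    simp only [Function.Embedding.coeFn_mk, riseCount_prepend]
    cases x 0 <;> simp [prepend] <;> ring

lemma card_filter_riseCount_le {q : ℝ} (hq : 0 ≤ q) (L : ℕ) (d : ℝ) :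
    (((paddedWords L).filter fun x => (riseCount L x : ℝ) ≤ d).card : ℝ) ≤
      Real.exp (2 * q * d + q) * (1 + Real.exp (-q)) ^ L := by
  have key : ∑ x ∈ (paddedWords L).filter (fun x => (riseCount L x : ℝ) ≤ d),
      Real.exp (-(2 * q * d + q)) ≤ (1 + Real.exp (-q)) ^ L := by
    rw [← sum_paddedWords_weight]
    refine (Finset.sum_le_sum fun x hx => ?_).trans
      (Finset.sum_le_sum_of_subset_of_nonneg (Finset.filter_subset _ _) fun x _ _ => ?_)
    · have hd := (Finset.mem_filter.1 hx).2
      have h1 : Real.exp (-q) ≤ if x 0 = true then Real.exp (-q) else 1 := by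
        split_ifs
        · exact le_rfl
        · exact Real.exp_le_one_iff.2 (by linarith)
      refine le_trans ?_ (mul_le_mul_of_nonneg_left h1 (by positivity))
      rw [← Real.exp_nat_mul, ← Real.exp_add]
      push_cast
      exact Real.exp_le_exp.2 (by nlinarith)
    · split_ifs <;> positivity
  rw [Finset.sum_const, nsmul_eq_mul, Real.exp_neg, ← div_eq_mul_inv,
    div_le_iff₀ (Real.exp_pos _)] at key
  linarith

lemma riseCount_truncate_le (L : ℕ) (x : ℕ → Bool) :
    riseCount L (fun i => if i < L then x i else false) ≤ riseCount L x := by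
  refine Finset.sum_le_sum fun j hj => ?_
  have := Finset.mem_range.1 hj
  by_cases h : j + 1 < L <;> simp [this, h]

lemma mem_bowenBall_of_eq {ε : ℝ} {M : ℕ} (hM : (1 / 2 : ℝ) ^ M < ε) {N : ℕ} {x y : ℕ → Bool}
    (h : ∀ i < N + M, y i = x i) : x ∈ bowenBall shift y N ε := by
  intro j hj
  refine lt_of_le_of_lt (PiNat.mem_cylinder_iff_dist_le.1 ?_) hM
  intro i hi
  rw [shift_iterate_apply, shift_iterate_apply, h _ (by omega)]

lemma tendsto_riseCount_div {x : ℕ → Bool} {a : ℝ} (h1 : hasFreq (List.replicate 1 false) x a)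
    (h2 : hasFreq (List.replicate 2 false) x a) :
    Tendsto (fun L : ℕ => (riseCount L x : ℝ) / L) atTop (𝓝 0) := by
  have h := h1.sub h2
  rw [sub_self] at h
  classical
  refine h.congr fun L => ?_
  rw [← sub_div, ← Finset.sum_sub_distrib, riseCount, Nat.cast_sum]
  congr 1
  refine Finset.sum_congr rfl fun j _ => ?_
  have e1 : shift^[j] x ∈ cyl (List.replicate 1 false) ↔ x j = false := by
    rw [mem_cyl_replicate]
    simp [shift_iterate_apply]
  have e2 : shift^[j] x ∈ cyl (List.replicate 2 false) ↔ x j = false ∧ x (j + 1) = false := by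
    simp only [mem_cyl_replicate, shift_iterate_apply, Nat.forall_lt_succ_left]
    simp
  simp only [indicator_apply, e1, e2]
  cases x j <;> cases x (j + 1) <;> simp

/-- Covering by the words of length `N + M`, `N ≥ n`, with few occurrences of `01`. -/
lemma bowenH_le_tsum {Z : Set (ℕ → Bool)} {δ : ℝ}
    (hZ : ∀ x ∈ Z, ∀ᶠ L : ℕ in atTop, (riseCount L x : ℝ) ≤ δ * L)
    {ε : ℝ} {M : ℕ} (hM : (1 / 2 : ℝ) ^ M < ε) (s : ℝ) {n k : ℕ} (hk : n ≤ k) :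
    bowenH shift Z s ε n ≤ ∑' i : ℕ, ENNReal.ofReal
      ((((paddedWords (k + i + M)).filter fun x =>
        (riseCount (k + i + M) x : ℝ) ≤ δ * (k + i + M : ℕ)).card : ℝ) *
          Real.exp (-s * (k + i : ℕ))) := by
  let W (i : ℕ) : Finset ((ℕ → Bool) × ℕ) := ((paddedWords (k + i + M)).filter fun x =>
    (riseCount (k + i + M) x : ℝ) ≤ δ * (k + i + M : ℕ)).map
      ⟨fun x => (x, k + i), Prod.mk_left_injective _⟩
  have hcover : bowenH shift Z s ε n ≤ ∑' p : (⋃ i, (W i : Set ((ℕ → Bool) × ℕ)) : Set _),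
      ENNReal.ofReal (Real.exp (-s * ((p : (ℕ → Bool) × ℕ).2 : ℝ))) := by
    unfold bowenH
    refine iInf_le_of_le (⋃ i, (W i : Set ((ℕ → Bool) × ℕ))) ?_
    refine iInf_le_of_le (countable_iUnion fun i => (W i).countable_toSet) ?_
    refine iInf_le_of_le ?_ (iInf_le_of_le ?_ le_rfl)
    · intro p hp
      obtain ⟨i, hi⟩ := mem_iUnion.1 hp
      obtain ⟨x, -, rfl⟩ := Finset.mem_map.1 hi
      exact hk.trans (Nat.le_add_right _ _)
    · intro x hx
      obtain ⟨L₀, hL₀⟩ := eventually_atTop.1 (hZ x hx)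
      have hL := hL₀ (k + L₀ + M) (by omega)
      refine mem_biUnion (x := (fun i => if i < k + L₀ + M then x i else false, k + L₀))
        (mem_iUnion.2 ⟨L₀, Finset.mem_map.2 ⟨_, Finset.mem_filter.2 ⟨mem_paddedWords ?_, ?_⟩, rfl⟩⟩)
        (mem_bowenBall_of_eq hM ?_)
      · intro i hi
        simp [hi]
      · exact le_trans (by exact_mod_cast riseCount_truncate_le _ _) hL
      · intro i hi
        simp [hi]
  refine (hcover.trans (ENNReal.tsum_iUnion_le_tsum
    (fun p : (ℕ → Bool) × ℕ => ENNReal.ofReal (Real.exp (-s * (p.2 : ℝ)))) _)).trans ?_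
  refine ENNReal.tsum_le_tsum fun i => ?_
  refine ((W i).tsum_subtype fun p : (ℕ → Bool) × ℕ =>
    ENNReal.ofReal (Real.exp (-s * (p.2 : ℝ)))).trans_le ?_
  simp only [W, Finset.sum_map, Function.Embedding.coeFn_mk, Finset.sum_const, nsmul_eq_mul]
  rw [ENNReal.ofReal_mul (Nat.cast_nonneg _), ENNReal.ofReal_natCast]

lemma bowenH_eq_zero {Z : Set (ℕ → Bool)}
    (hZ : ∀ x ∈ Z, Tendsto (fun L : ℕ => (riseCount L x : ℝ) / L) atTop (𝓝 0))
    {ε : ℝ} (hε : 0 < ε) {s : ℝ} (hs : 0 < s) (n : ℕ) : bowenH shift Z s ε n = 0 := by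
  obtain ⟨M, hM⟩ := exists_pow_lt_of_lt_one hε (by norm_num : (1 / 2 : ℝ) < 1)
  set q : ℝ := 4 / s with hq
  have hq0 : 0 < q := by positivity
  have hqs : Real.exp (-q) ≤ s / 4 := by
    rw [Real.exp_neg, inv_le_comm₀ (Real.exp_pos _) (by positivity), inv_div]
    linarith [Real.add_one_le_exp q]
  set δ : ℝ := s / (8 * q) with hδ
  have hδ0 : 0 < δ := by positivity
  have hδq : 2 * q * δ = s / 4 := by
    rw [hδ]
    field_simp
    norm_num
  have hZ' : ∀ x ∈ Z, ∀ᶠ L : ℕ in atTop, (riseCount L x : ℝ) ≤ δ * L := by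
    intro x hx
    filter_upwards [(hZ x hx).eventually_lt_const hδ0, eventually_gt_atTop 0] with L hL hL0
    rw [div_lt_iff₀ (by exact_mod_cast hL0)] at hL
    exact hL.le
  have hterm (N : ℕ) : (((paddedWords (N + M)).filter fun x =>
        (riseCount (N + M) x : ℝ) ≤ δ * (N + M : ℕ)).card : ℝ) * Real.exp (-s * N) ≤
      Real.exp (q + s / 2 * M) * Real.exp (-(s / 2)) ^ N := by
    have hbase : (1 + Real.exp (-q)) ^ (N + M) ≤ Real.exp ((N + M : ℕ) * (s / 4)) := by
      rw [Real.exp_nat_mul]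
      refine pow_le_pow_left₀ (by positivity) ?_ _
      linarith [Real.add_one_le_exp (s / 4)]
    calc _ ≤ Real.exp (2 * q * (δ * (N + M : ℕ)) + q) * Real.exp ((N + M : ℕ) * (s / 4)) *
          Real.exp (-s * N) := by
          gcongr
          exact (card_filter_riseCount_le hq0.le _ _).trans (by gcongr)
      _ = _ := by
          rw [← mul_assoc (2 * q), hδq, ← Real.exp_nat_mul, ← Real.exp_add, ← Real.exp_add,
            ← Real.exp_add]
          congr 1
          push_cast
          ring
  set K : ℝ≥0∞ := ENNReal.ofReal (Real.exp (q + s / 2 * M)) with hK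
  set ρ : ℝ≥0∞ := ENNReal.ofReal (Real.exp (-(s / 2))) with hρ
  have hρ1 : ρ < 1 := by
    rw [hρ, ENNReal.ofReal_lt_one]
    exact Real.exp_lt_one_iff.2 (by linarith)
  have hbound (k : ℕ) (hk : n ≤ k) : bowenH shift Z s ε n ≤ K * (1 - ρ)⁻¹ * ρ ^ k := by
    refine (bowenH_le_tsum hZ' hM s hk).trans ?_
    calc _ ≤ ∑' i : ℕ, K * ρ ^ k * ρ ^ i := by
          refine ENNReal.tsum_le_tsum fun i => ?_
          refine (ENNReal.ofReal_le_ofReal (hterm (k + i))).trans_eq ?_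
          rw [ENNReal.ofReal_mul (Real.exp_pos _).le, ENNReal.ofReal_pow (Real.exp_pos _).le,
            pow_add, mul_assoc]
      _ = _ := by
          rw [ENNReal.tsum_mul_left, ENNReal.tsum_geometric]
          ring
  have hC : K * (1 - ρ)⁻¹ ≠ ∞ :=
    ENNReal.mul_ne_top ENNReal.ofReal_ne_top (ENNReal.inv_ne_top.2 (tsub_pos_of_lt hρ1).ne')
  have hlim := ENNReal.Tendsto.const_mul
    (ENNReal.tendsto_pow_atTop_nhds_zero_of_lt_one hρ1) (Or.inr hC)
  rw [mul_zero] at hlim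
  exact le_antisymm (ge_of_tendsto hlim ((eventually_ge_atTop n).mono hbound)) zero_le

lemma bowenEntropy_eq_zero {Z : Set (ℕ → Bool)}
    (hZ : ∀ x ∈ Z, Tendsto (fun L : ℕ => (riseCount L x : ℝ) / L) atTop (𝓝 0)) :
    bowenEntropy shift Z = 0 := by
  refine le_antisymm (iSup₂_le fun ε hε => ?_) zero_le
  refine ENNReal.le_of_forall_pos_le_add fun s hs _ => ?_
  rw [zero_add]
  refine sInf_le ⟨s, ?_, rfl⟩
  simp [bowenH_eq_zero hZ hε (NNReal.coe_pos.2 hs)]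

end ZeroOneShift

/-- **Remark (final example of Section 5).** If `a_n = a` for all `n ≥ 1` (with
`0 ≤ a ≤ 1`), then the unique shift-invariant probability measure with `μ([0^n]) = a` for
all `n ≥ 1` is `a δ_{0^∞} + (1-a) δ_{1^∞}`, and the recurrence set
`R(a;{[0^n]}_{n≥1})` has zero Bowen topological entropy. -/
theorem constant_frequencies (a : ℝ) (h0 : 0 ≤ a) (h1 : a ≤ 1) :
    (∀ μ : Measure (ℕ → Bool), IsProbabilityMeasure μ → MeasurePreserving shift μ μ →
      (∀ n : ℕ, 1 ≤ n → (μ (cyl (List.replicate n false))).toReal = a) →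
      μ = ENNReal.ofReal a • Measure.dirac (fun _ => false) +
          ENNReal.ofReal (1 - a) • Measure.dirac (fun _ => true)) ∧
    bowenEntropy shift
      {x : ℕ → Bool | ∀ k : ℕ, 1 ≤ k → hasFreq (List.replicate k false) x a} = 0 := by
  refine ⟨fun μ _ hT hμ => ?_, bowenEntropy_eq_zero fun x hx =>
    tendsto_riseCount_div (hx 1 le_rfl) (hx 2 one_le_two)⟩
  rw [ENNReal.ofReal_sub _ h0, ENNReal.ofReal_one]
  refine measure_eq_of_constant_cylinders hT fun n hn => ?_
  rw [← hμ n hn, ENNReal.ofReal_toReal (measure_ne_top _ _)]
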